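/- For arbitrary q^i p^j, q^k p^l in the bicyclic monoid C(p,q) and any m ≥ max{i, j, k, l}, one has q^i p^j · W_{2m}(q^k p^l) ⊆ W_m(q^i p^j · q^k p^l) and W_{2m}(q^k p^l) · q^i p^j ⊆ W_m(q^k p^l · q^i p^j), where W_n(q^s p^t) = {q^s p^t} ∪ {q^a p^b : a > n or b > n}. -/

import Mathlib

/-- The bicyclic monoid `C(p,q)` modeled on `ℕ × ℕ`, where `(k, l)` represents `q^k p^l`:
`(k,l)·(m,n) = (k + (m ∸ l), n + (l ∸ m))`. -/
def bmul (a b : ℕ × ℕ) : ℕ × ℕ := (a.1 + (b.1 - a.2), b.2 + (a.2 - b.1))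

/-- `W_n(q^s p^t) = {q^s p^t} ∪ {q^a p^b : a > n or b > n}`. -/
def Wc (n : ℕ) (x : ℕ × ℕ) : Set (ℕ × ℕ) := {x} ∪ {y | n < y.1 ∨ n < y.2}

/-!
Multiplying by `q^i p^j` on the left lowers each exponent by at most `j`, and multiplying by it on
the right lowers each exponent by at most `i`. A map that lowers both exponents by at most `d`
sends `W_{n+d}(x)` into `W_n` of the image of `x`, and for `i, j ≤ m` the set `W_{2m}(x)` is
contained in both `W_{m+j}(x)` and `W_{m+i}(x)`.
-/

theorem Wc_antitone (x : ℕ × ℕ) : Antitone fun n => Wc n x := fun _ _ hmn =>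
  Set.union_subset_union_right _ fun _ => Or.imp hmn.trans_lt hmn.trans_lt

theorem image_Wc_add_subset {f : ℕ × ℕ → ℕ × ℕ} {d : ℕ} (hfst : ∀ y, y.1 ≤ (f y).1 + d)
    (hsnd : ∀ y, y.2 ≤ (f y).2 + d) (n : ℕ) (x : ℕ × ℕ) :
    f '' Wc (n + d) x ⊆ Wc n (f x) := by
  rintro _ ⟨y, rfl | hy | hy, rfl⟩
  · exact Or.inl rfl
  · exact Or.inr (Or.inl (lt_of_add_lt_add_right (hy.trans_le (hfst y))))
  · exact Or.inr (Or.inr (lt_of_add_lt_add_right (hy.trans_le (hsnd y))))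

theorem fst_le_fst_bmul_left_add (a y : ℕ × ℕ) : y.1 ≤ (bmul a y).1 + a.2 := by
  simp only [bmul]
  omega

theorem snd_le_snd_bmul_left (a y : ℕ × ℕ) : y.2 ≤ (bmul a y).2 :=
  Nat.le_add_right _ _

theorem fst_le_fst_bmul_right (a y : ℕ × ℕ) : y.1 ≤ (bmul y a).1 :=
  Nat.le_add_right _ _

theorem snd_le_snd_bmul_right_add (a y : ℕ × ℕ) : y.2 ≤ (bmul y a).2 + a.1 := by
  simp only [bmul]
  omega

theorem stmt8_general (a x : ℕ × ℕ) (n : ℕ) :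
    (fun y => bmul a y) '' Wc (n + a.2) x ⊆ Wc n (bmul a x) ∧
    (fun y => bmul y a) '' Wc (n + a.1) x ⊆ Wc n (bmul x a) :=
  ⟨image_Wc_add_subset (fst_le_fst_bmul_left_add a)
      (fun y => le_add_right (snd_le_snd_bmul_left a y)) n x,
    image_Wc_add_subset (fun y => le_add_right (fst_le_fst_bmul_right a y))
      (snd_le_snd_bmul_right_add a) n x⟩

/-- For any `m ≥ max{i, j, k, l}`:
`q^i p^j · W_{2m}(q^k p^l) ⊆ W_m(q^i p^j · q^k p^l)` and
`W_{2m}(q^k p^l) · q^i p^j ⊆ W_m(q^k p^l · q^i p^j)`. -/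
theorem stmt8 (i j k l m : ℕ) (hm : max (max i j) (max k l) ≤ m) :
    (fun x => bmul (i, j) x) '' Wc (2 * m) (k, l) ⊆ Wc m (bmul (i, j) (k, l)) ∧
    (fun x => bmul x (i, j)) '' Wc (2 * m) (k, l) ⊆ Wc m (bmul (k, l) (i, j)) :=
  (stmt8_general (i, j) (k, l) m).imp
    (Set.image_mono (Wc_antitone _ (show m + j ≤ 2 * m by omega))).trans
    (Set.image_mono (Wc_antitone _ (show m + i ≤ 2 * m by omega))).trans
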